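/- arXiv:2010.03254 — 2 statements merged into one kernel-verified Lean document; each statement's English description precedes it below -/
import Mathlib

section
/- Let P : ℤ → ℝ/ℤ be given by P(n) = α₀ + α₁n + ⋯ + α_d n^d with at least one of α₁,…,α_d irrational (as elements of ℝ/ℤ, i.e., not torsion). Then P is equidistributed: for every continuous F : ℝ/ℤ → ℝ, (1/(2N+1)) Σ_{n=−N}^{N} F(P(n)) → ∫_{ℝ/ℤ} F. In particular, the range of P is dense in ℝ/ℤ, so P cannot avoid any interval of positive length. -/
open MeasureTheory Filter

/-!
Weyl's criterion reduces equidistribution to showing that the averages of `e(p(n))` tend to `0`,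
where a nonconstant coefficient of `p` is irrational. More flexibly, average `e(p(n)) v(n)` with
`v` a periodic sequence in the circle. A rational leading term of `p` gives a periodic sequence, so
it can be moved into `v`, and one may assume that the leading coefficient is irrational. Van der
Corput's inequality then replaces `p` by `p(n + h) - p(n)` and `v(n)` by `v(n + h) / v(n)`: the
degree drops by one and the leading coefficient stays irrational. In degree one, translation by a
period of `v` multiplies the sequence by a constant `ω ≠ 1`, while it barely changes the averages
over a Følner sequence, so that these tend to `0`.
-/

open Finset Polynomial
open scoped BigOperators ComplexConjugate FourierTransform Pointwise symmDiff Topology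

section Foelner

variable {G X ι : Type*} [AddGroup G] [AddAction G X] [MeasurableSpace X]
  [MeasurableSingletonClass X] {l : Filter ι} {s : ι → Finset X}

theorem isAddFoelner_count_coe_iff [DecidableEq X] :
    IsAddFoelner G Measure.count l (fun i ↦ (s i : Set X)) ↔
      (∀ᶠ i in l, (s i).Nonempty) ∧
        ∀ g : G, Tendsto (fun i ↦ (#((g +ᵥ s i) ∆ s i) / #(s i) : ℝ)) l (𝓝 0) := by
  have count_ratio (g : G) (i : ι) (hi : (s i).Nonempty) :
      Measure.count ((g +ᵥ (s i : Set X)) ∆ (s i : Set X)) / Measure.count (s i : Set X) =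
        ENNReal.ofReal (#((g +ᵥ s i) ∆ s i) / #(s i)) := by
    rw [← coe_vadd_finset, ← coe_symmDiff, Measure.count_apply_finset, Measure.count_apply_finset,
      ENNReal.ofReal_div_of_pos (mod_cast hi.card_pos), ENNReal.ofReal_natCast,
      ENNReal.ofReal_natCast]
  have tendsto_ratio_iff (hs : ∀ᶠ i in l, (s i).Nonempty) (g : G) :
      Tendsto (fun i ↦ Measure.count ((g +ᵥ (s i : Set X)) ∆ (s i : Set X)) /
          Measure.count (s i : Set X)) l (𝓝 0) ↔
        Tendsto (fun i ↦ (#((g +ᵥ s i) ∆ s i) / #(s i) : ℝ)) l (𝓝 0) := by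
    rw [tendsto_congr' (hs.mono (count_ratio g)),
      ← ENNReal.tendsto_toReal_iff (by simp) (by simp)]
    simp only [ENNReal.toReal_zero]
    exact tendsto_congr fun i ↦ ENNReal.toReal_ofReal (by positivity)
  refine ⟨fun h ↦ ?_, fun ⟨hs, h⟩ ↦ ?_⟩
  · have hs : ∀ᶠ i in l, (s i).Nonempty := by
      simpa [nonempty_iff_ne_empty] using h.eventually_meas_ne_zero
    exact ⟨hs, fun g ↦ (tendsto_ratio_iff hs g).1 (h.tendsto_meas_vadd_symmDiff g)⟩
  · exact {
      eventually_measurableSet := .of_forall fun i ↦ (s i).measurableSet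
      eventually_meas_ne_zero := by simpa [nonempty_iff_ne_empty] using hs
      eventually_meas_ne_top := by simp
      tendsto_meas_vadd_symmDiff := fun g ↦ (tendsto_ratio_iff hs g).2 (h g) }

theorem card_vadd_Icc_symmDiff_Icc_le (g a b : ℤ) :
    (#((g +ᵥ Finset.Icc a b) ∆ Finset.Icc a b) : ℤ) ≤ 4 * |g| + 2 := by
  have subset_union : (g +ᵥ Finset.Icc a b) ∆ Finset.Icc a b ⊆
      Finset.Icc (a - |g|) (a + |g|) ∪ Finset.Icc (b - |g|) (b + |g|) := by
    intro n
    simp only [mem_symmDiff, ← neg_vadd_mem_iff, Finset.mem_Icc, mem_union, vadd_eq_add]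
    grind
  have card_le := (card_le_card subset_union).trans (card_union_le _ _)
  simp only [Int.card_Icc] at card_le
  have := abs_nonneg g
  lia

theorem isAddFoelner_count_Icc {a b : ι → ℤ} (hab : Tendsto (fun i ↦ b i - a i) l atTop) :
    IsAddFoelner ℤ Measure.count l (fun i ↦ (Finset.Icc (a i) (b i) : Set ℤ)) := by
  refine isAddFoelner_count_coe_iff.2 ⟨?_, fun g ↦ ?_⟩
  · filter_upwards [hab.eventually_ge_atTop 0] with i hi
    exact nonempty_Icc.2 (sub_nonneg.1 hi)
  have length_le_card (i : ι) : ((b i - a i : ℤ) : ℝ) ≤ #(Finset.Icc (a i) (b i)) := by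
    rw [Int.card_Icc]
    exact_mod_cast (by lia : b i - a i ≤ ((b i + 1 - a i).toNat : ℤ))
  have tendsto_card : Tendsto (fun i ↦ (#(Finset.Icc (a i) (b i)) : ℝ)) l atTop :=
    tendsto_atTop_mono length_le_card (tendsto_intCast_atTop_atTop.comp hab)
  refine squeeze_zero (fun i ↦ by positivity) (fun i ↦ ?_)
    (tendsto_card.const_div_atTop ((4 * |g| + 2 : ℤ) : ℝ))
  gcongr
  exact_mod_cast card_vadd_Icc_symmDiff_Icc_le g (a i) (b i)

theorem norm_sum_sub_sum_le_mul_card_symmDiff {α E : Type*} [DecidableEq α]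
    [SeminormedAddCommGroup E] {f : α → E} {C : ℝ} (hf : ∀ x, ‖f x‖ ≤ C) (s t : Finset α) :
    ‖∑ x ∈ s, f x - ∑ x ∈ t, f x‖ ≤ C * #(s ∆ t) := by
  have norm_sum_le (r : Finset α) : ‖∑ x ∈ r, f x‖ ≤ C * #r := by
    simpa [mul_comm] using norm_sum_le_of_le r fun x _ ↦ hf x
  calc ‖∑ x ∈ s, f x - ∑ x ∈ t, f x‖ = ‖∑ x ∈ s \ t, f x - ∑ x ∈ t \ s, f x‖ := by
        rw [sum_sdiff_sub_sum_sdiff]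
    _ ≤ C * #(s \ t) + C * #(t \ s) :=
        (norm_sub_le _ _).trans (add_le_add (norm_sum_le _) (norm_sum_le _))
    _ = C * #(s ∆ t) := by
        rw [symmDiff_def, sup_eq_union, card_union_of_disjoint disjoint_sdiff_sdiff]
        push_cast
        ring

variable {𝕜 : Type*} [RCLike 𝕜]

theorem tendsto_expect_vadd_sub_expect
    (hs : IsAddFoelner G Measure.count l (fun i ↦ (s i : Set X))) {f : X → 𝕜} {C : ℝ}
    (hf : ∀ x, ‖f x‖ ≤ C) (g : G) :
    Tendsto (fun i ↦ 𝔼 x ∈ s i, f (g +ᵥ x) - 𝔼 x ∈ s i, f x) l (𝓝 0) := by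
  classical
  have sum_vadd (t : Finset X) : ∑ x ∈ t, f (g +ᵥ x) = ∑ x ∈ g +ᵥ t, f x :=
    (sum_image (AddAction.injective g).injOn).symm
  have norm_le (i : ι) : ‖𝔼 x ∈ s i, f (g +ᵥ x) - 𝔼 x ∈ s i, f x‖ ≤
      C * (#((g +ᵥ s i) ∆ s i) / #(s i)) := by
    rw [expect_eq_sum_div_card, expect_eq_sum_div_card, ← sub_div, norm_div, RCLike.norm_natCast,
      ← mul_div_assoc, sum_vadd]
    gcongr
    exact norm_sum_sub_sum_le_mul_card_symmDiff hf _ _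
  exact squeeze_zero_norm norm_le
    (by simpa using ((isAddFoelner_count_coe_iff.1 hs).2 g).const_mul C)

theorem tendsto_expect_zero_of_vadd_eq_mul
    (hs : IsAddFoelner G Measure.count l (fun i ↦ (s i : Set X))) {f : X → 𝕜} {C : ℝ}
    (hf : ∀ x, ‖f x‖ ≤ C) {g : G} {ω : 𝕜} (hω : ω ≠ 1) (hfg : ∀ x, f (g +ᵥ x) = ω * f x) :
    Tendsto (fun i ↦ 𝔼 x ∈ s i, f x) l (𝓝 0) := by
  have scaled := (tendsto_expect_vadd_sub_expect hs hf g).const_mul (ω - 1)⁻¹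
  simp only [hfg, ← mul_expect, mul_zero] at scaled
  refine scaled.congr fun i ↦ ?_
  rw [← sub_one_mul, inv_mul_cancel_left₀ (sub_ne_zero.2 hω)]

end Foelner

section VanDerCorput

variable {𝕜 : Type*} [RCLike 𝕜] {C : ℝ}

theorem norm_mul_conj_le {a b : 𝕜} (ha : ‖a‖ ≤ C) (hb : ‖b‖ ≤ C) : ‖a * conj b‖ ≤ C ^ 2 := by
  rw [norm_mul, RCLike.norm_conj, sq]
  exact mul_le_mul ha hb (norm_nonneg b) ((norm_nonneg a).trans ha)

theorem norm_expect_sq_le {α : Type*} (s : Finset α) (f : α → 𝕜) :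
    ‖𝔼 x ∈ s, f x‖ ^ 2 ≤ 𝔼 x ∈ s, ‖f x‖ ^ 2 := by
  rcases s.eq_empty_or_nonempty with rfl | hs
  · simp
  calc ‖𝔼 x ∈ s, f x‖ ^ 2 ≤ (𝔼 x ∈ s, 1 * ‖f x‖) ^ 2 := by
        simp only [one_mul]
        gcongr
        exact RCLike.norm_expect_le (K := 𝕜)
    _ ≤ (𝔼 _x ∈ s, 1 ^ 2) * 𝔼 x ∈ s, ‖f x‖ ^ 2 := expect_mul_sq_le_sq_mul_sq s _ _
    _ = 𝔼 x ∈ s, ‖f x‖ ^ 2 := by simp [hs]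

theorem expect_norm_expect_sq {α κ : Type*} (s : Finset α) (t : Finset κ) (f : κ → α → 𝕜) :
    ((𝔼 x ∈ s, ‖𝔼 h ∈ t, f h x‖ ^ 2 : ℝ) : 𝕜) =
      𝔼 h ∈ t, 𝔼 k ∈ t, 𝔼 x ∈ s, f h x * conj (f k x) := by
  calc ((𝔼 x ∈ s, ‖𝔼 h ∈ t, f h x‖ ^ 2 : ℝ) : 𝕜)
      = 𝔼 x ∈ s, (𝔼 h ∈ t, f h x) * conj (𝔼 k ∈ t, f k x) := by
        simp only [RCLike.mul_conj, RCLike.ofReal_expect, RCLike.ofReal_pow]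
    _ = 𝔼 x ∈ s, 𝔼 h ∈ t, 𝔼 k ∈ t, f h x * conj (f k x) := by
        simp only [map_expect, expect_mul_expect]
    _ = 𝔼 h ∈ t, 𝔼 k ∈ t, 𝔼 x ∈ s, f h x * conj (f k x) := by
        rw [expect_comm]
        exact expect_congr rfl fun h _ ↦ expect_comm ..

theorem expect_norm_expect_sq_le {α κ : Type*} {s : Finset α} {t : Finset κ} (ht : t.Nonempty)
    {f : κ → α → 𝕜} (hf : ∀ h x, ‖f h x‖ ≤ C) {ε : ℝ} (hε : 0 ≤ ε)
    (hcorr : ∀ h ∈ t, ∀ k ∈ t, h ≠ k → ‖𝔼 x ∈ s, f h x * conj (f k x)‖ ≤ ε) :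
    𝔼 x ∈ s, ‖𝔼 h ∈ t, f h x‖ ^ 2 ≤ C ^ 2 / #t + ε := by
  classical
  have correlation_le (h : κ) (hh : h ∈ t) (k : κ) (hk : k ∈ t) :
      ‖𝔼 x ∈ s, f h x * conj (f k x)‖ ≤ (if h = k then C ^ 2 else 0) + ε := by
    split_ifs with hhk
    · refine le_add_of_le_of_nonneg ?_ hε
      rcases s.eq_empty_or_nonempty with rfl | hs
      · simpa using sq_nonneg C
      · exact (RCLike.norm_expect_le (K := 𝕜)).trans
          (expect_le hs fun x _ ↦ norm_mul_conj_le (hf h x) (hf k x))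
    · simpa using hcorr h hh k hk hhk
  have expect_diagonal (h : κ) (hh : h ∈ t) :
      𝔼 k ∈ t, ((if h = k then C ^ 2 else 0) + ε) = C ^ 2 / #t + ε := by
    rw [expect_add_distrib, expect_const ht, expect_eq_sum_div_card, sum_ite_eq, if_pos hh]
  calc 𝔼 x ∈ s, ‖𝔼 h ∈ t, f h x‖ ^ 2
      = ‖((𝔼 x ∈ s, ‖𝔼 h ∈ t, f h x‖ ^ 2 : ℝ) : 𝕜)‖ := by
        rw [RCLike.norm_ofReal, abs_of_nonneg (expect_nonneg fun _ _ ↦ by positivity)]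
    _ ≤ 𝔼 h ∈ t, 𝔼 k ∈ t, ‖𝔼 x ∈ s, f h x * conj (f k x)‖ := by
        rw [expect_norm_expect_sq]
        exact (RCLike.norm_expect_le (K := 𝕜)).trans
          (expect_le_expect fun _ _ ↦ RCLike.norm_expect_le (K := 𝕜))
    _ ≤ 𝔼 h ∈ t, 𝔼 k ∈ t, ((if h = k then C ^ 2 else 0) + ε) :=
        expect_le_expect fun h hh ↦ expect_le_expect fun k hk ↦ correlation_le h hh k hk
    _ = C ^ 2 / #t + ε := by rw [expect_congr rfl expect_diagonal, expect_const ht]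

variable {G X ι : Type*} [AddGroup G] [AddAction G X] [MeasurableSpace X]
  [MeasurableSingletonClass X] {l : Filter ι} {s : ι → Finset X} {u : X → 𝕜}

theorem tendsto_expect_expect_vadd_sub_expect
    (hs : IsAddFoelner G Measure.count l (fun i ↦ (s i : Set X))) (hu : ∀ x, ‖u x‖ ≤ C)
    {t : Finset G} (ht : t.Nonempty) :
    Tendsto (fun i ↦ 𝔼 x ∈ s i, 𝔼 h ∈ t, u (h +ᵥ x) - 𝔼 x ∈ s i, u x) l (𝓝 0) := by
  have averaged :=
    (tendsto_finsetSum t fun h _ ↦ tendsto_expect_vadd_sub_expect hs hu h).div_const (#t : 𝕜)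
  simp only [sum_const_zero, zero_div, ← expect_eq_sum_div_card] at averaged
  refine averaged.congr fun i ↦ ?_
  rw [expect_sub_distrib, expect_const ht, expect_comm]

theorem tendsto_expect_vadd_mul_conj_vadd
    (hs : IsAddFoelner G Measure.count l (fun i ↦ (s i : Set X))) (hu : ∀ x, ‖u x‖ ≤ C)
    (hcorr : ∀ h : G, h ≠ 0 → Tendsto (fun i ↦ 𝔼 x ∈ s i, u (h +ᵥ x) * conj (u x)) l (𝓝 0))
    {h k : G} (hhk : h ≠ k) :
    Tendsto (fun i ↦ 𝔼 x ∈ s i, u (h +ᵥ x) * conj (u (k +ᵥ x))) l (𝓝 0) := by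
  have bound (x : X) : ‖u ((h - k) +ᵥ x) * conj (u x)‖ ≤ C ^ 2 := norm_mul_conj_le (hu _) (hu _)
  have shifted := (tendsto_expect_vadd_sub_expect hs bound k).add (hcorr _ (sub_ne_zero.2 hhk))
  simpa only [sub_add_cancel, add_zero, vadd_vadd] using shifted

theorem eventually_expect_norm_expect_vadd_sq_le
    (hs : IsAddFoelner G Measure.count l (fun i ↦ (s i : Set X))) (hu : ∀ x, ‖u x‖ ≤ C)
    (hcorr : ∀ h : G, h ≠ 0 → Tendsto (fun i ↦ 𝔼 x ∈ s i, u (h +ᵥ x) * conj (u x)) l (𝓝 0))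
    {t : Finset G} (ht : t.Nonempty) {ε : ℝ} (hε : 0 < ε) :
    ∀ᶠ i in l, 𝔼 x ∈ s i, ‖𝔼 h ∈ t, u (h +ᵥ x)‖ ^ 2 ≤ C ^ 2 / #t + ε := by
  have off_diagonal : ∀ᶠ i in l, ∀ h ∈ t, ∀ k ∈ t, h ≠ k →
      ‖𝔼 x ∈ s i, u (h +ᵥ x) * conj (u (k +ᵥ x))‖ ≤ ε := by
    simp only [eventually_all_finset, eventually_imp_distrib_left]
    intro h _ k _ hhk
    have norm_tendsto := (tendsto_expect_vadd_mul_conj_vadd hs hu hcorr hhk).norm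
    rw [norm_zero] at norm_tendsto
    exact norm_tendsto.eventually_le_const hε
  exact off_diagonal.mono fun i ↦ expect_norm_expect_sq_le ht (fun h x ↦ hu (h +ᵥ x)) hε.le

theorem tendsto_expect_zero_of_tendsto_correlations [Infinite G]
    (hs : IsAddFoelner G Measure.count l (fun i ↦ (s i : Set X))) (hu : ∀ x, ‖u x‖ ≤ C)
    (hcorr : ∀ h : G, h ≠ 0 → Tendsto (fun i ↦ 𝔼 x ∈ s i, u (h +ᵥ x) * conj (u x)) l (𝓝 0)) :
    Tendsto (fun i ↦ 𝔼 x ∈ s i, u x) l (𝓝 0) := by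
  rw [NormedAddGroup.tendsto_nhds_zero]
  intro ε hε
  obtain ⟨m, hm⟩ := exists_nat_gt (8 * C ^ 2 / ε ^ 2)
  obtain ⟨t, ht_card⟩ := Infinite.exists_subset_card_eq G (m + 1)
  have ht : t.Nonempty := card_pos.1 (by lia)
  have diagonal_small : C ^ 2 / #t ≤ ε ^ 2 / 8 := by
    rw [div_lt_iff₀ (by positivity)] at hm
    rw [div_le_iff₀ (mod_cast ht.card_pos), ht_card]
    push_cast
    nlinarith [sq_nonneg ε]
  have close := (tendsto_expect_expect_vadd_sub_expect hs hu ht).norm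
  rw [norm_zero] at close
  filter_upwards [close.eventually_lt_const (half_pos hε),
    eventually_expect_norm_expect_vadd_sq_le hs hu hcorr ht (by positivity : 0 < ε ^ 2 / 8)]
    with i hclose hsq
  have double_average_small : ‖𝔼 x ∈ s i, 𝔼 h ∈ t, u (h +ᵥ x)‖ ≤ ε / 2 := by
    refine abs_le_of_sq_le_sq' ?_ (by positivity) |>.2
    calc _ ≤ _ := norm_expect_sq_le _ _
      _ ≤ _ := hsq
      _ ≤ (ε / 2) ^ 2 := by linarith
  calc ‖𝔼 x ∈ s i, u x‖
      ≤ ‖𝔼 x ∈ s i, 𝔼 h ∈ t, u (h +ᵥ x)‖ +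
        ‖𝔼 x ∈ s i, 𝔼 h ∈ t, u (h +ᵥ x) - 𝔼 x ∈ s i, u x‖ := norm_le_norm_add_norm_sub _ _
    _ < ε := by linarith

end VanDerCorput

section TaylorSub

variable {R : Type*} [CommRing R] {p : R[X]} {k : ℕ}

theorem coeff_taylor_sub_self (hp : p.natDegree ≤ k + 1) (h : R) :
    (taylor h p - p).coeff k = (k + 1) * h * p.coeff (k + 1) := by
  have natDegree_hasseDeriv : (hasseDeriv k p).natDegree < 2 :=
    (natDegree_hasseDeriv_le p k).trans_lt (by lia)
  rw [coeff_sub, taylor_coeff, eval_eq_sum_range' natDegree_hasseDeriv]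
  simp only [hasseDeriv_coeff, sum_range_succ, range_one, sum_singleton, zero_add, Nat.choose_self,
    Nat.cast_one, one_mul, pow_zero, mul_one, add_comm 1 k, Nat.choose_succ_self_right,
    Nat.cast_add, pow_one, add_sub_cancel_left]
  ring

theorem natDegree_taylor_sub_self_le (hp : p.natDegree ≤ k + 1) (h : R) :
    (taylor h p - p).natDegree ≤ k := by
  refine natDegree_le_iff_coeff_eq_zero.2 fun n hn ↦ ?_
  have natDegree_hasseDeriv : (hasseDeriv n p).natDegree < 1 :=
    (natDegree_hasseDeriv_le p n).trans_lt (by lia)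
  rw [coeff_sub, taylor_coeff, eval_eq_sum_range' natDegree_hasseDeriv]
  simp [hasseDeriv_coeff]

end TaylorSub

section FourierChar

theorem fourierChar_eq_one_iff {x : ℝ} : 𝐞 x = 1 ↔ ∃ n : ℤ, x = n := by
  simp only [Real.fourierChar_apply', Circle.exp_eq_one, mul_comm (2 * Real.pi),
    mul_left_inj' Real.two_pi_pos.ne']

theorem fourierChar_ne_one_of_irrational {x : ℝ} (hx : Irrational x) : 𝐞 x ≠ 1 := by
  rw [Ne, fourierChar_eq_one_iff]
  rintro ⟨n, hn⟩
  exact hx.ne_int n hn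

theorem fourier_coe_eq_fourierChar (m : ℤ) (y : ℝ) :
    fourier m (y : AddCircle (1 : ℝ)) = (𝐞 (m * y) : ℂ) := by
  rw [fourier_coe_apply, Real.fourierChar_apply]
  congr 1
  push_cast
  ring

theorem periodic_fourierChar_ratCast_mul_pow (a : ℚ) (k : ℕ) :
    Function.Periodic (fun n : ℤ ↦ 𝐞 (a * (n : ℝ) ^ k)) a.den := by
  intro n
  obtain ⟨c, hc⟩ : (a.den : ℤ) ∣ (n + a.den) ^ k - n ^ k := by
    simpa using sub_dvd_pow_sub_pow (n + a.den : ℤ) n k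
  have difference_int : a * ((n + a.den : ℤ) : ℝ) ^ k - a * (n : ℝ) ^ k = (a.num * c : ℤ) := by
    have num_eq : (a : ℝ) * a.den = a.num := mod_cast a.mul_den_eq_num
    have hc' : ((n + a.den : ℤ) : ℝ) ^ k - (n : ℝ) ^ k = a.den * c := mod_cast hc
    rw [← mul_sub, hc', ← mul_assoc, num_eq]
    push_cast
    rfl
  rw [← div_eq_one, ← AddChar.map_sub_eq_div]
  exact fourierChar_eq_one_iff.2 ⟨_, difference_int⟩

end FourierChar

section WeylSum

variable {ι : Type*} {l : Filter ι} {s : ι → Finset ℤ}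

theorem tendsto_expect_fourierChar_eval_mul_of_irrational_coeff
    (hs : IsAddFoelner ℤ Measure.count l (fun i ↦ (s i : Set ℤ))) {q : ℤ} (hq : q ≠ 0) {k : ℕ}
    {p : ℝ[X]} (hp : p.natDegree ≤ k + 1) (hirr : Irrational (p.coeff (k + 1)))
    {v : ℤ → Circle} (hv : Function.Periodic v q) :
    Tendsto (fun i ↦ 𝔼 n ∈ s i, ((𝐞 (p.eval (n : ℝ)) * v n : Circle) : ℂ)) l (𝓝 0) := by
  have norm_le_one (z : Circle) : ‖(z : ℂ)‖ ≤ 1 := z.norm_coe.le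
  induction k generalizing p v with
  | zero =>
    have hω : (𝐞 (p.coeff 1 * q) : ℂ) ≠ 1 := by
      rw [Ne, Circle.coe_eq_one]
      exact fourierChar_ne_one_of_irrational (hirr.mul_intCast hq)
    refine tendsto_expect_zero_of_vadd_eq_mul hs (fun _ ↦ norm_le_one _) (g := q) hω fun n ↦ ?_
    rw [eq_X_add_C_of_natDegree_le_one hp, vadd_eq_add, add_comm q n, hv, ← Circle.coe_mul,
      ← mul_assoc, ← AddChar.map_add_eq_mul]
    congr 4
    simp only [Int.cast_add, eval_add, eval_mul, eval_C, eval_X, coeff_add, coeff_mul_X,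
      coeff_C_zero, coeff_C_succ, add_zero]
    ring
  | succ k ih =>
    refine tendsto_expect_zero_of_tendsto_correlations (G := ℤ) hs (fun _ ↦ norm_le_one _)
      fun h hh ↦ ?_
    have irrational_coeff : Irrational ((taylor (h : ℝ) p - p).coeff (k + 1)) := by
      rw [coeff_taylor_sub_self hp]
      exact_mod_cast hirr.intCast_mul (m := (k + 1 + 1) * h) (by positivity)
    have periodic : Function.Periodic (fun n ↦ v (h + n) / v n) q := fun n ↦ by
      simp only [← add_assoc, hv _]
    refine (ih (natDegree_taylor_sub_self_le hp _) irrational_coeff periodic).congr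
      fun i ↦ expect_congr rfl fun n _ ↦ ?_
    rw [← Circle.coe_inv_eq_conj, ← Circle.coe_mul, vadd_eq_add, eval_sub, taylor_eval,
      AddChar.map_sub_eq_div, div_mul_div_comm, ← div_eq_mul_inv, Int.cast_add, add_comm (n : ℝ)]

theorem tendsto_expect_fourierChar_eval_mul
    (hs : IsAddFoelner ℤ Measure.count l (fun i ↦ (s i : Set ℤ))) {p : ℝ[X]}
    (hp : ∃ j ≠ 0, Irrational (p.coeff j)) {v : ℤ → Circle} {q : ℤ} (hq : q ≠ 0)
    (hv : Function.Periodic v q) :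
    Tendsto (fun i ↦ 𝔼 n ∈ s i, ((𝐞 (p.eval (n : ℝ)) * v n : Circle) : ℂ)) l (𝓝 0) := by
  induction hd : p.natDegree using Nat.strong_induction_on generalizing p v q with
  | h d ih =>
    obtain ⟨j, hj, hirr⟩ := hp
    have natDegree_ne_zero : p.natDegree ≠ 0 :=
      (hj.bot_lt.trans_le (le_natDegree_of_ne_zero hirr.ne_zero)).ne'
    by_cases hlead : Irrational p.leadingCoeff
    · obtain ⟨k, hk⟩ := Nat.exists_eq_add_one_of_ne_zero natDegree_ne_zero
      exact tendsto_expect_fourierChar_eval_mul_of_irrational_coeff hs hq hk.le (hk ▸ hlead) hv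
    obtain ⟨a, ha⟩ := exists_rat_of_not_irrational hlead
    have irrational_eraseLead : Irrational (p.eraseLead.coeff j) := by
      rwa [eraseLead_coeff_of_ne]
      rintro rfl
      exact hlead hirr
    have natDegree_eraseLead : p.eraseLead.natDegree < d := by
      have := eraseLead_natDegree_le p
      lia
    have periodic : Function.Periodic (fun n : ℤ ↦ 𝐞 (a * (n : ℝ) ^ d) * v n) (q * a.den) :=
      ((periodic_fourierChar_ratCast_mul_pow a d).int_mul q).mul
        (mul_comm q a.den ▸ hv.int_mul a.den)
    refine (ih _ natDegree_eraseLead ⟨j, hj, irrational_eraseLead⟩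
      (mul_ne_zero hq (mod_cast a.den_nz)) periodic rfl).congr fun i ↦ expect_congr rfl fun n _ ↦ ?_
    conv_rhs => rw [← eraseLead_add_monomial_natDegree_leadingCoeff p, eval_add, eval_monomial, ha,
      hd, AddChar.map_add_eq_mul, mul_assoc]

end WeylSum

section Equidistribution

theorem uniformEquicontinuous_expect_apply {α ι X 𝕜 : Type*} [TopologicalSpace X]
    [CompactSpace X] [RCLike 𝕜] (x : α → X) (s : ι → Finset α) :
    UniformEquicontinuous fun (i : ι) (F : C(X, 𝕜)) ↦ 𝔼 n ∈ s i, F (x n) := by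
  refine LipschitzWith.uniformEquicontinuous _ 1 fun i ↦ .of_dist_le_mul fun F₁ F₂ ↦ ?_
  rw [NNReal.coe_one, one_mul, dist_eq_norm, dist_eq_norm, ← expect_sub_distrib]
  rcases (s i).eq_empty_or_nonempty with hi | hi
  · simp [hi]
  · exact (RCLike.norm_expect_le (K := 𝕜)).trans
      (expect_le hi fun n _ ↦ (F₁ - F₂).norm_coe_le_norm (x n))

variable {α ι X : Type*} [TopologicalSpace X] [MeasurableSpace X]
  {l : Filter ι} {s : ι → Finset α} {x : α → X} {μ : Measure X}

/-- The points `x n`, averaged over the finite sets `s i` along the filter `l`, are equidistributed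
with respect to `μ`, in the sense of convergence against continuous test functions. -/
def IsEquidistributed (x : α → X) (s : ι → Finset α) (l : Filter ι) (μ : Measure X) : Prop :=
  ∀ F : C(X, ℝ), Tendsto (fun i ↦ 𝔼 n ∈ s i, F (x n)) l (𝓝 (∫ y, F y ∂μ))

theorem isEquidistributed_of_forall_tendsto {𝕜 : Type*} [RCLike 𝕜]
    (h : ∀ F : C(X, 𝕜), Tendsto (fun i ↦ 𝔼 n ∈ s i, F (x n)) l (𝓝 (∫ y, F y ∂μ))) :
    IsEquidistributed x s l μ := by
  intro F
  have hF := (RCLike.continuous_re.tendsto _).comp (h ⟨fun y ↦ (F y : 𝕜), by fun_prop⟩)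
  simp only [ContinuousMap.coe_mk] at hF
  rw [integral_ofReal, RCLike.ofReal_re] at hF
  refine hF.congr fun i ↦ ?_
  simp only [Function.comp_apply, ← RCLike.ofReal_expect, RCLike.ofReal_re]

variable [CompactSpace X]

theorem IsEquidistributed.denseRange [OpensMeasurableSpace X] [CompletelyRegularSpace X]
    [IsFiniteMeasure μ] [μ.IsOpenPosMeasure] [l.NeBot] (h : IsEquidistributed x s l μ) :
    DenseRange x := by
  by_contra hx
  simp only [DenseRange, Dense, not_forall] at hx
  obtain ⟨y, hy⟩ := hx
  obtain ⟨f, hf, hfy, hf_closure⟩ :=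
    CompletelyRegularSpace.completely_regular y (closure (Set.range x)) isClosed_closure hy
  let F : C(X, ℝ) := ⟨fun z ↦ 1 - f z, by fun_prop⟩
  have F_range (n : α) : F (x n) = 0 := by
    simp [F, hf_closure (subset_closure (Set.mem_range_self n))]
  have integral_pos : 0 < ∫ z, F z ∂μ :=
    F.continuous.integral_pos_of_hasCompactSupport_nonneg_nonzero
      (.of_compactSpace F) (fun z ↦ unitInterval.one_minus_nonneg (f z))
      (x := y) (by simp [F, hfy])
  have integral_eq_zero : ∫ z, F z ∂μ = 0 :=
    tendsto_nhds_unique (h F) (by simp only [F_range, expect_const_zero, tendsto_const_nhds])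
  exact integral_pos.ne' integral_eq_zero

section DenseSpan

variable {𝕜 : Type*} [RCLike 𝕜] [OpensMeasurableSpace X] [IsFiniteMeasure μ]

theorem integrable_continuousMap (F : C(X, 𝕜)) : Integrable F μ :=
  F.continuous.integrable_of_hasCompactSupport (.of_compactSpace F)

theorem continuous_integral_continuousMap : Continuous fun F : C(X, 𝕜) ↦ ∫ y, F y ∂μ := by
  refine (LipschitzWith.of_dist_le' (K := μ.real Set.univ) fun F₁ F₂ ↦ ?_).continuous
  rw [dist_eq_norm, dist_eq_norm, mul_comm, ← integral_sub (integrable_continuousMap F₁)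
    (integrable_continuousMap F₂)]
  exact norm_integral_le_of_norm_le_const (.of_forall (F₁ - F₂).norm_coe_le_norm)

theorem tendsto_expect_of_span_closure_eq_top {S : Set C(X, 𝕜)}
    (hS : (Submodule.span 𝕜 S).topologicalClosure = ⊤)
    (h : ∀ F ∈ S, Tendsto (fun i ↦ 𝔼 n ∈ s i, F (x n)) l (𝓝 (∫ y, F y ∂μ))) (F : C(X, 𝕜)) :
    Tendsto (fun i ↦ 𝔼 n ∈ s i, F (x n)) l (𝓝 (∫ y, F y ∂μ)) := by
  have tendsto_of_mem_span (F : C(X, 𝕜)) (hF : F ∈ Submodule.span 𝕜 S) :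
      Tendsto (fun i ↦ 𝔼 n ∈ s i, F (x n)) l (𝓝 (∫ y, F y ∂μ)) := by
    induction hF using Submodule.span_induction with
    | mem F hF => exact h F hF
    | zero => simpa using tendsto_const_nhds
    | add F₁ F₂ _ _ h₁ h₂ =>
      simpa [expect_add_distrib, integral_add (integrable_continuousMap F₁)
        (integrable_continuousMap F₂)] using h₁.add h₂
    | smul c F _ hF => simpa [← mul_expect, integral_const_mul] using hF.const_mul c
  have isClosed_tendsto := (uniformEquicontinuous_expect_apply x s).equicontinuous
    |>.isClosed_setOfPred_tendsto (l := l) (continuous_integral_continuousMap (𝕜 := 𝕜) (μ := μ))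
  have mem_closure : F ∈ (Submodule.span 𝕜 S).topologicalClosure := hS ▸ Submodule.mem_top
  exact closure_minimal tendsto_of_mem_span isClosed_tendsto mem_closure

end DenseSpan

theorem isEquidistributed_haarAddCircle_of_tendsto_fourier {T : ℝ} [hT : Fact (0 < T)]
    {x : α → AddCircle T} (hs : ∀ᶠ i in l, (s i).Nonempty)
    (h : ∀ m : ℤ, m ≠ 0 → Tendsto (fun i ↦ 𝔼 n ∈ s i, fourier m (x n)) l (𝓝 0)) :
    IsEquidistributed x s l AddCircle.haarAddCircle := by
  refine isEquidistributed_of_forall_tendsto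
    (tendsto_expect_of_span_closure_eq_top span_fourier_closure_eq_top ?_)
  rintro _ ⟨m, rfl⟩
  by_cases hm : m = 0
  · subst hm
    simpa using tendsto_const_nhds.congr' (hs.mono fun i hi ↦ (expect_const hi (1 : ℂ)).symm)
  · rw [integral_eq_zero_of_add_right_eq_neg (fourier_add_half_inv_index hm hT.out)]
    exact h m hm

end Equidistribution

theorem isEquidistributed_eval_of_irrational_coeff {ι : Type*} {l : Filter ι} {s : ι → Finset ℤ}
    (hs : IsAddFoelner ℤ Measure.count l (fun i ↦ (s i : Set ℤ))) {p : ℝ[X]}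
    (hp : ∃ j ≠ 0, Irrational (p.coeff j)) :
    IsEquidistributed (fun n : ℤ ↦ ((p.eval (n : ℝ) : ℝ) : AddCircle (1 : ℝ))) s l volume := by
  rw [AddCircle.volume_eq_smul_haarAddCircle, ENNReal.ofReal_one, one_smul]
  refine isEquidistributed_haarAddCircle_of_tendsto_fourier (isAddFoelner_count_coe_iff.1 hs).1
    fun m hm ↦ ?_
  have irrational_coeff : ∃ j ≠ 0, Irrational ((C (m : ℝ) * p).coeff j) := by
    obtain ⟨j, hj, hirr⟩ := hp
    exact ⟨j, hj, coeff_C_mul p ▸ hirr.intCast_mul hm⟩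
  have periodic_one : Function.Periodic (1 : ℤ → Circle) 1 := fun _ ↦ rfl
  simpa only [fourier_coe_eq_fourierChar, eval_C_mul, Pi.one_apply, mul_one] using
    tendsto_expect_fourierChar_eval_mul hs irrational_coeff one_ne_zero periodic_one

theorem expect_Icc_neg_natCast (f : ℤ → ℝ) (N : ℕ) :
    𝔼 n ∈ Finset.Icc (-(N : ℤ)) N, f n =
      1 / (2 * (N : ℝ) + 1) * ∑ n ∈ Finset.Icc (-(N : ℤ)) N, f n := by
  have card_Icc : #(Finset.Icc (-(N : ℤ)) N) = 2 * N + 1 := by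
    rw [Int.card_Icc]
    lia
  rw [expect_eq_sum_div_card, card_Icc, div_eq_inv_mul, one_div]
  push_cast
  rfl

theorem isAddFoelner_count_Icc_neg_natCast :
    IsAddFoelner ℤ Measure.count atTop (fun N : ℕ ↦ (Finset.Icc (-(N : ℤ)) N : Set ℤ)) :=
  isAddFoelner_count_Icc <| tendsto_atTop_mono (fun N ↦ by lia) tendsto_natCast_atTop_atTop

theorem stmt_15_general {ι : Type*} {l : Filter ι} [l.NeBot] {s : ι → Finset ℤ}
    (hs : IsAddFoelner ℤ Measure.count l (fun i ↦ (s i : Set ℤ))) {p : ℝ[X]}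
    (hp : ∃ j ≠ 0, Irrational (p.coeff j)) :
    IsEquidistributed (fun n : ℤ ↦ ((p.eval (n : ℝ) : ℝ) : AddCircle (1 : ℝ))) s l volume ∧
      DenseRange (fun n : ℤ ↦ ((p.eval (n : ℝ) : ℝ) : AddCircle (1 : ℝ))) :=
  have equidistributed := isEquidistributed_eval_of_irrational_coeff hs hp
  ⟨equidistributed, equidistributed.denseRange⟩

/-- Weyl equidistribution: if `P(n) = α₀ + α₁n + ⋯ + α_d n^d` has some nonconstant
coefficient irrational, then `P mod 1` is equidistributed in `ℝ/ℤ`; in particular its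
range is dense. -/
theorem stmt_15 (d : ℕ) (α : ℕ → ℝ) (P : ℤ → ℝ)
    (hP : ∀ n : ℤ, P n = ∑ i ∈ Finset.range (d + 1), α i * (n : ℝ) ^ i)
    (hirr : ∃ i ∈ Finset.Icc 1 d, Irrational (α i)) :
    (∀ F : C(AddCircle (1 : ℝ), ℝ),
      Tendsto (fun N : ℕ => (1 / (2 * (N : ℝ) + 1)) *
          ∑ n ∈ Finset.Icc (-(N : ℤ)) (N : ℤ), F ((P n : ℝ) : AddCircle (1 : ℝ)))
        atTop (nhds (∫ x : AddCircle (1 : ℝ), F x))) ∧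
    DenseRange (fun n : ℤ => ((P n : ℝ) : AddCircle (1 : ℝ))) := by
  obtain ⟨j, hj, hirr⟩ := hirr
  rw [Finset.mem_Icc] at hj
  let p : ℝ[X] := ∑ i ∈ Finset.range (d + 1), monomial i (α i)
  have eval_p (n : ℤ) : p.eval (n : ℝ) = P n := by
    simp only [p, hP, eval_finsetSum, eval_monomial]
  have coeff_p : p.coeff j = α j := by
    simp only [p, finsetSum_coeff, coeff_monomial, sum_ite_eq', Finset.mem_range]
    exact if_pos (by lia)
  have weyl := stmt_15_general isAddFoelner_count_Icc_neg_natCast ⟨j, by lia, coeff_p ▸ hirr⟩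
  simpa only [IsEquidistributed, expect_Icc_neg_natCast, eval_p] using weyl
end

section
/- Let P : ℤ → ℝ/ℤ be a polynomial of degree at most d (P(n) = α₀ + α₁n + ⋯ + α_d n^d) that avoids some interval I ⊂ ℝ/ℤ of positive length. Then all nonconstant coefficients α₁,…,α_d are rational (torsion in ℝ/ℤ); in particular P is periodic: there is Q ≥ 1 with P(n+Q) = P(n) for all n. -/
open Filter Topology Function Set MeasureTheory
open scoped fwdDiff RealInnerProductSpace

/-!
If the leading coefficient of `P` is not torsion, then `P` has dense range, so it meets every
interval. By Weyl's criterion it suffices that the averages of `ψ ∘ P` tend to zero for every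
nontrivial character `ψ`. Van der Corput's inequality replaces `ψ ∘ P` by the correlations
`ψ (P (n + m) - P n)` with `m ≠ 0`, which lowers the degree and multiplies the top iterated
difference, a non-torsion constant, by `m`; in degree one the averages are geometric sums.

If instead the leading coefficient is killed by `q ≠ 0`, then `n ↦ P (q n)` has lower degree and
coefficients `q ^ i • α i`, which are torsion exactly when the `α i` are, so one can descend.
-/

section BirkhoffAverage

variable {α E : Type*}

theorem birkhoffAverage_comp_iterate (R : Type*) [DivisionSemiring R] [AddCommMonoid E] [Module R E]
    (f : α → α) (g : α → E) (i N : ℕ) (x : α) :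
    birkhoffAverage R f (g ∘ f^[i]) N x = birkhoffAverage R f g N (f^[i] x) := by
  simp only [birkhoffAverage, birkhoffSum, comp_apply, ← iterate_add_apply, add_comm]

theorem birkhoffAverage_finsetSum (R : Type*) [DivisionSemiring R] [AddCommMonoid E] [Module R E]
    {ι : Type*} (s : Finset ι) (f : α → α) (g : ι → α → E) (N : ℕ) (x : α) :
    birkhoffAverage R f (fun y ↦ ∑ i ∈ s, g i y) N x = ∑ i ∈ s, birkhoffAverage R f (g i) N x := by
  simp only [birkhoffAverage, birkhoffSum, Finset.smul_sum]
  exact Finset.sum_comm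

theorem birkhoffAverage_const_smul (R : Type*) {S : Type*} [DivisionSemiring R] [AddCommMonoid E]
    [Module R E] [Monoid S] [DistribMulAction S E] [SMulCommClass R S E] (c : S) (f : α → α)
    (g : α → E) (N : ℕ) (x : α) :
    birkhoffAverage R f (fun y ↦ c • g y) N x = c • birkhoffAverage R f g N x := by
  simp only [birkhoffAverage, birkhoffSum, ← Finset.smul_sum]
  exact smul_comm _ _ _

section NormedSpace

variable [NormedAddCommGroup E] [NormedSpace ℝ E] {f : α → α} {g : α → E} {x : α} {C : ℝ}

theorem norm_birkhoffAverage_le (hg : ∀ y, ‖g y‖ ≤ C) (N : ℕ) :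
    ‖birkhoffAverage ℝ f g N x‖ ≤ C := by
  rcases N.eq_zero_or_pos with rfl | hN
  · simpa using (norm_nonneg _).trans (hg x)
  calc ‖birkhoffAverage ℝ f g N x‖
      ≤ (N : ℝ)⁻¹ * ∑ k ∈ Finset.range N, ‖g (f^[k] x)‖ := by
        rw [birkhoffAverage, norm_smul, norm_inv, Real.norm_natCast]
        gcongr
        exact norm_sum_le _ _
    _ ≤ (N : ℝ)⁻¹ * (N • C) := by
        gcongr
        simpa using Finset.sum_le_card_nsmul (Finset.range N) _ C fun k _ ↦ hg (f^[k] x)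
    _ = C := by rw [nsmul_eq_mul, inv_mul_cancel_left₀ (by positivity)]

theorem sq_norm_birkhoffAverage_le (f : α → α) (g : α → E) (N : ℕ) (x : α) :
    ‖birkhoffAverage ℝ f g N x‖ ^ 2 ≤ birkhoffAverage ℝ f (fun y ↦ ‖g y‖ ^ 2) N x := by
  rcases N.eq_zero_or_pos with rfl | hN
  · simp
  calc ‖birkhoffAverage ℝ f g N x‖ ^ 2
      = (N : ℝ)⁻¹ ^ 2 * ‖∑ k ∈ Finset.range N, g (f^[k] x)‖ ^ 2 := by
        rw [birkhoffAverage, birkhoffSum, norm_smul, norm_inv, Real.norm_natCast, mul_pow]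
    _ ≤ (N : ℝ)⁻¹ ^ 2 * (∑ k ∈ Finset.range N, ‖g (f^[k] x)‖) ^ 2 := by
        gcongr
        exact norm_sum_le _ _
    _ ≤ (N : ℝ)⁻¹ ^ 2 * (N * ∑ k ∈ Finset.range N, ‖g (f^[k] x)‖ ^ 2) := by
        gcongr
        simpa using sq_sum_le_card_mul_sum_sq (s := Finset.range N) (f := fun k ↦ ‖g (f^[k] x)‖)
    _ = birkhoffAverage ℝ f (fun y ↦ ‖g y‖ ^ 2) N x := by
        rw [birkhoffAverage, birkhoffSum, smul_eq_mul]
        field_simp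

theorem tendsto_birkhoffAverage_comp_iterate_sub (hg : ∀ y, ‖g y‖ ≤ C) (f : α → α)
    (i : ℕ) (x : α) :
    Tendsto (fun N ↦ birkhoffAverage ℝ f (g ∘ f^[i]) N x - birkhoffAverage ℝ f g N x)
      atTop (𝓝 0) := by
  have hbounded : Bornology.IsBounded (range g) :=
    isBounded_iff_forall_norm_le.mpr ⟨C, forall_mem_range.mpr hg⟩
  induction i with
  | zero => simp
  | succ i ih =>
    have hstep := tendsto_birkhoffAverage_apply_sub_birkhoffAverage' ℝ hbounded f (f^[i] x)
    simpa only [birkhoffAverage_comp_iterate, iterate_succ_apply', sub_add_sub_cancel, add_zero]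
      using hstep.add ih

theorem tendsto_birkhoffAverage_birkhoffAverage_sub (hg : ∀ y, ‖g y‖ ≤ C)
    (f : α → α) {H : ℕ} (hH : H ≠ 0) (x : α) :
    Tendsto (fun N ↦ birkhoffAverage ℝ f (birkhoffAverage ℝ f g H) N x - birkhoffAverage ℝ f g N x)
      atTop (𝓝 0) := by
  have hsum : Tendsto (fun N ↦ (H : ℝ)⁻¹ • ∑ i ∈ Finset.range H,
      (birkhoffAverage ℝ f (g ∘ f^[i]) N x - birkhoffAverage ℝ f g N x)) atTop (𝓝 0) := by
    simpa using (tendsto_finsetSum (Finset.range H) fun i _ ↦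
      tendsto_birkhoffAverage_comp_iterate_sub hg f i x).const_smul (H : ℝ)⁻¹
  refine hsum.congr fun N ↦ ?_
  have hsplit : birkhoffAverage ℝ f (birkhoffAverage ℝ f g H) N x
      = (H : ℝ)⁻¹ • ∑ i ∈ Finset.range H, birkhoffAverage ℝ f (g ∘ f^[i]) N x := by
    rw [← birkhoffAverage_finsetSum, ← birkhoffAverage_const_smul]
    rfl
  rw [hsplit, Finset.sum_sub_distrib, smul_sub, Finset.sum_const, Finset.card_range,
    ← Nat.cast_smul_eq_nsmul ℝ, inv_smul_smul₀ (Nat.cast_ne_zero.mpr hH)]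

end NormedSpace

section VanDerCorput

variable [NormedAddCommGroup E] [InnerProductSpace ℝ E] {f : α → α} {g : α → E} {x : α} {C : ℝ}

theorem birkhoffAverage_sq_norm_birkhoffAverage (f : α → α) (g : α → E) (H N : ℕ) (x : α) :
    birkhoffAverage ℝ f (fun y ↦ ‖birkhoffAverage ℝ f g H y‖ ^ 2) N x
      = (H : ℝ)⁻¹ ^ 2 * ∑ i ∈ Finset.range H, ∑ j ∈ Finset.range H,
          birkhoffAverage ℝ f (fun y ↦ ⟪g (f^[i] y), g (f^[j] y)⟫) N x := by
  simp only [← birkhoffAverage_finsetSum, ← smul_eq_mul, ← birkhoffAverage_const_smul]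
  congr! 2 with y
  rw [birkhoffAverage, norm_smul, mul_pow, ← real_inner_self_eq_norm_sq (birkhoffSum f g H y),
    birkhoffSum, sum_inner]
  simp only [inner_sum, norm_inv, Real.norm_natCast, smul_eq_mul]

theorem tendsto_birkhoffAverage_inner_iterate (hg : ∀ y, ‖g y‖ ≤ C)
    (hcorr : ∀ k ≠ 0, Tendsto (birkhoffAverage ℝ f (fun y ↦ ⟪g y, g (f^[k] y)⟫) · x) atTop (𝓝 0))
    {i j : ℕ} (hij : i ≠ j) :
    Tendsto (birkhoffAverage ℝ f (fun y ↦ ⟪g (f^[i] y), g (f^[j] y)⟫) · x) atTop (𝓝 0) := by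
  wlog hlt : i < j generalizing i j
  · simpa only [real_inner_comm] using this hij.symm (by omega)
  obtain ⟨k, rfl⟩ := Nat.exists_eq_add_of_lt hlt
  have hbounded (y : α) : ‖⟪g y, g (f^[k + 1] y)⟫‖ ≤ C * C :=
    (norm_inner_le_norm _ _).trans <|
      mul_le_mul (hg _) (hg _) (norm_nonneg _) ((norm_nonneg _).trans (hg y))
  have hshift := (tendsto_birkhoffAverage_comp_iterate_sub hbounded f i x).add
    (hcorr (k + 1) k.succ_ne_zero)
  simp only [sub_add_cancel, add_zero] at hshift
  refine hshift.congr fun N ↦ ?_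
  congr! 2
  rw [comp_apply, ← iterate_add_apply, add_comm (k + 1), add_assoc]

theorem eventually_birkhoffAverage_inner_iterate_le (hg : ∀ y, ‖g y‖ ≤ C)
    (hcorr : ∀ k ≠ 0, Tendsto (birkhoffAverage ℝ f (fun y ↦ ⟪g y, g (f^[k] y)⟫) · x) atTop (𝓝 0))
    (i j : ℕ) {δ : ℝ} (hδ : 0 < δ) :
    ∀ᶠ N in atTop, birkhoffAverage ℝ f (fun y ↦ ⟪g (f^[i] y), g (f^[j] y)⟫) N x
      ≤ (if i = j then C ^ 2 else 0) + δ := by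
  rcases eq_or_ne i j with rfl | hij
  · have hdiag (y : α) : ‖⟪g (f^[i] y), g (f^[i] y)⟫‖ ≤ C ^ 2 := by
      rw [real_inner_self_eq_norm_sq, norm_pow, norm_norm]
      gcongr
      exact hg _
    refine .of_forall fun N ↦ ?_
    rw [if_pos rfl]
    exact (Real.le_norm_self _).trans <|
      (norm_birkhoffAverage_le hdiag N).trans (le_add_of_nonneg_right hδ.le)
  · rw [if_neg hij, zero_add]
    exact (tendsto_birkhoffAverage_inner_iterate hg hcorr hij).eventually_le_const hδ

theorem eventually_sq_norm_birkhoffAverage_birkhoffAverage_le (hg : ∀ y, ‖g y‖ ≤ C)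
    (hcorr : ∀ k ≠ 0, Tendsto (birkhoffAverage ℝ f (fun y ↦ ⟪g y, g (f^[k] y)⟫) · x) atTop (𝓝 0))
    {H : ℕ} (hH : H ≠ 0) {δ : ℝ} (hδ : 0 < δ) :
    ∀ᶠ N in atTop,
      ‖birkhoffAverage ℝ f (birkhoffAverage ℝ f g H) N x‖ ^ 2 ≤ C ^ 2 / H + δ := by
  have hentries := (Finset.range H).eventually_all.mpr fun i _ ↦
    (Finset.range H).eventually_all.mpr fun j _ ↦
      eventually_birkhoffAverage_inner_iterate_le hg hcorr i j hδ
  filter_upwards [hentries] with N hN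
  calc ‖birkhoffAverage ℝ f (birkhoffAverage ℝ f g H) N x‖ ^ 2
      ≤ (H : ℝ)⁻¹ ^ 2 * ∑ i ∈ Finset.range H, ∑ j ∈ Finset.range H,
          birkhoffAverage ℝ f (fun y ↦ ⟪g (f^[i] y), g (f^[j] y)⟫) N x :=
        (sq_norm_birkhoffAverage_le _ _ _ _).trans_eq
          (birkhoffAverage_sq_norm_birkhoffAverage _ _ _ _ _)
    _ ≤ (H : ℝ)⁻¹ ^ 2 * ∑ i ∈ Finset.range H, ∑ j ∈ Finset.range H,
          ((if i = j then C ^ 2 else 0) + δ) := by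
        gcongr with i hi j hj
        exact hN i hi j hj
    _ = (H : ℝ)⁻¹ ^ 2 * (H * C ^ 2 + H * (H * δ)) := by
        simp +contextual [Finset.sum_add_distrib, ↓reduceIte]
    _ = C ^ 2 / H + δ := by field_simp

theorem tendsto_birkhoffAverage_zero_of_tendsto_inner (hg : ∀ y, ‖g y‖ ≤ C)
    (hcorr : ∀ k ≠ 0, Tendsto (birkhoffAverage ℝ f (fun y ↦ ⟪g y, g (f^[k] y)⟫) · x) atTop (𝓝 0)) :
    Tendsto (birkhoffAverage ℝ f g · x) atTop (𝓝 0) := by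
  rw [NormedAddGroup.tendsto_nhds_zero]
  intro ε hε
  obtain ⟨H, hH, hCH⟩ : ∃ H : ℕ, H ≠ 0 ∧ C ^ 2 / H < (ε / 2) ^ 2 / 2 :=
    ((eventually_ne_atTop 0).and <|
      (tendsto_const_div_atTop_nhds_zero_nat (C ^ 2)).eventually_lt_const (by positivity)).exists
  filter_upwards [eventually_sq_norm_birkhoffAverage_birkhoffAverage_le hg hcorr hH
      (δ := (ε / 2) ^ 2 / 2) (by positivity),
    NormedAddGroup.tendsto_nhds_zero.mp
      (tendsto_birkhoffAverage_birkhoffAverage_sub hg f hH x) (ε / 2) (half_pos hε)]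
    with N hsq hdiff
  have hdouble : ‖birkhoffAverage ℝ f (birkhoffAverage ℝ f g H) N x‖ < ε / 2 :=
    lt_of_pow_lt_pow_left₀ 2 (by positivity) (by linarith)
  calc ‖birkhoffAverage ℝ f g N x‖
      ≤ ‖birkhoffAverage ℝ f (birkhoffAverage ℝ f g H) N x‖
        + ‖birkhoffAverage ℝ f (birkhoffAverage ℝ f g H) N x - birkhoffAverage ℝ f g N x‖ :=
        norm_le_norm_add_norm_sub _ _
    _ < ε := by linarith

end VanDerCorput

end BirkhoffAverage

section Equidistribution

variable {α X : Type*} [TopologicalSpace X] [MeasurableSpace X] {f : α → α} {x : α} {u : α → X}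
  {μ : Measure X}

/-- Equidistribution with respect to `μ` of the sequence `u x, u (f x), u (f^[2] x), …`: the
averages of every continuous test function along it converge to the integral. An ordinary sequence
is the case `f = Nat.succ`, `x = 0`. -/
def EquidistributedAlong (f : α → α) (x : α) (u : α → X) (μ : Measure X) : Prop :=
  ∀ φ : C(X, ℂ), Tendsto (birkhoffAverage ℝ f (φ ∘ u) · x) atTop (𝓝 (∫ y, φ y ∂μ))

theorem EquidistributedAlong.denseRange [T2Space X] [CompactSpace X] [OpensMeasurableSpace X]
    [IsFiniteMeasureOnCompacts μ] [μ.IsOpenPosMeasure] (hu : EquidistributedAlong f x u μ) :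
    DenseRange u := by
  intro y
  by_contra hy
  obtain ⟨φ, hφ_zero, hφ_one, hφ_mem⟩ := exists_continuous_zero_one_of_isClosed isClosed_closure
    (isClosed_singleton (x := y)) (disjoint_singleton_right.mpr hy)
  have hpos : 0 < ∫ z, φ z ∂μ :=
    φ.continuous.integral_pos_of_hasCompactSupport_nonneg_nonzero (x := y)
      (.of_compactSpace _) (fun z ↦ (hφ_mem z).1) (by simp [hφ_one rfl])
  have hlim := hu ((⟨Complex.ofReal, Complex.continuous_ofReal⟩ : C(ℝ, ℂ)).comp φ)
  have hvanish (z : α) : φ (u z) = 0 := hφ_zero (subset_closure (mem_range_self z))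
  have hzero : ∫ z, (φ z : ℂ) ∂μ = 0 := by
    refine tendsto_nhds_unique hlim ?_
    simp [birkhoffAverage, birkhoffSum, hvanish]
  exact hpos.ne' (by exact_mod_cast integral_complex_ofReal.symm.trans hzero)

variable [CompactSpace X] [OpensMeasurableSpace X] [IsFiniteMeasureOnCompacts μ]

theorem integrable_continuousMap_s16 {E : Type*} [NormedAddCommGroup E] (φ : C(X, E)) :
    Integrable φ μ :=
  φ.continuous.integrable_of_hasCompactSupport (.of_compactSpace _)

theorem continuous_continuousMap_integral {E : Type*} [NormedAddCommGroup E] [NormedSpace ℝ E] :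
    Continuous fun φ : C(X, E) ↦ ∫ y, φ y ∂μ := by
  refine (LipschitzWith.of_dist_le' (K := μ.real univ) fun φ ψ ↦ ?_).continuous
  rw [dist_eq_norm, dist_eq_norm, ← integral_sub (integrable_continuousMap_s16 φ)
    (integrable_continuousMap_s16 ψ), mul_comm]
  exact norm_integral_le_of_norm_le_const (.of_forall (φ - ψ).norm_coe_le_norm)

theorem isClosed_setOf_tendsto_birkhoffAverage_integral :
    IsClosed {φ : C(X, ℂ) |
      Tendsto (birkhoffAverage ℝ f (φ ∘ u) · x) atTop (𝓝 (∫ y, φ y ∂μ))} := by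
  have hlipschitz (N : ℕ) :
      LipschitzWith 1 fun φ : C(X, ℂ) ↦ birkhoffAverage ℝ f (φ ∘ u) N x := by
    refine LipschitzWith.of_dist_le_mul fun φ ψ ↦ ?_
    rw [NNReal.coe_one, one_mul, dist_eq_norm, dist_eq_norm, ← Pi.sub_apply, ← Pi.sub_apply,
      ← birkhoffAverage_sub]
    exact norm_birkhoffAverage_le (fun y ↦ (φ - ψ).norm_coe_le_norm (u y)) N
  exact (LipschitzWith.uniformEquicontinuous _ 1 hlipschitz).equicontinuous
    |>.isClosed_setOfPred_tendsto continuous_continuousMap_integral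

theorem equidistributedAlong_of_topologicalClosure_span_eq_top {S : Set C(X, ℂ)}
    (hS : (Submodule.span ℂ S).topologicalClosure = ⊤)
    (h : ∀ φ ∈ S, Tendsto (birkhoffAverage ℝ f (φ ∘ u) · x) atTop (𝓝 (∫ y, φ y ∂μ))) :
    EquidistributedAlong f x u μ := by
  have hspan : ∀ φ ∈ Submodule.span ℂ S,
      Tendsto (birkhoffAverage ℝ f (φ ∘ u) · x) atTop (𝓝 (∫ y, φ y ∂μ)) := by
    intro φ hφ
    induction hφ using Submodule.span_induction with
    | mem φ hφ => exact h φ hφ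
    | zero => simp [birkhoffAverage, birkhoffSum]
    | add φ ψ _ _ hφ hψ =>
      have hadd : ∫ y, (φ + ψ) y ∂μ = ∫ y, φ y ∂μ + ∫ y, ψ y ∂μ :=
        integral_add (integrable_continuousMap_s16 φ) (integrable_continuousMap_s16 ψ)
      rw [hadd]
      refine (hφ.add hψ).congr fun N ↦ ?_
      rw [← Pi.add_apply, ← Pi.add_apply, ← birkhoffAverage_add]
      rfl
    | smul c φ _ hφ =>
      have hsmul : ∫ y, (c • φ) y ∂μ = c • ∫ y, φ y ∂μ := integral_smul c φ
      rw [hsmul]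
      exact (hφ.const_smul c).congr fun N ↦ (birkhoffAverage_const_smul ℝ c f _ N x).symm
  intro φ
  refine isClosed_setOf_tendsto_birkhoffAverage_integral.closure_subset_iff.mpr hspan ?_
  rw [← Submodule.topologicalClosure_coe, hS]
  trivial

theorem equidistributedAlong_haarAddCircle_of_tendsto_fourier {T : ℝ} [Fact (0 < T)]
    {u : α → AddCircle T}
    (h : ∀ m : ℤ, m ≠ 0 → Tendsto (birkhoffAverage ℝ f (fourier m ∘ u) · x) atTop (𝓝 0)) :
    EquidistributedAlong f x u AddCircle.haarAddCircle := by
  refine equidistributedAlong_of_topologicalClosure_span_eq_top span_fourier_closure_eq_top ?_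
  rintro _ ⟨m, rfl⟩
  rcases eq_or_ne m 0 with rfl | hm
  · have hone : (fourier 0 : C(AddCircle T, ℂ)) = 1 := by ext; exact fourier_zero
    simp only [hone]
    refine tendsto_const_nhds.congr' ?_
    filter_upwards [eventually_ne_atTop 0] with N hN
    simp [birkhoffAverage, birkhoffSum, hN]
  · rw [integral_eq_zero_of_add_right_eq_neg (fourier_add_half_inv_index hm Fact.out)]
    exact h m hm

end Equidistribution

section ForwardDifference

variable {M G : Type*} [AddCommMonoid M] [AddCommGroup G] {h : M} {c : G}

theorem commute_fwdDiff (h k : M) : Function.Commute (fwdDiff (G := G) h) (fwdDiff k) := by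
  intro g
  funext y
  simp only [fwdDiff, add_right_comm y k h]
  abel

theorem fwdDiff_nsmul_of_fwdDiff_eq_const {g : M → G} (hg : Δ_[h] g = fun _ ↦ c) (m : ℕ) :
    Δ_[m • h] g = fun _ ↦ m • c := by
  induction m with
  | zero => simp [fwdDiff, funext_iff]
  | succ m ih =>
    funext y
    have hstep := congrFun hg (y + m • h)
    have hprev := congrFun ih y
    simp only [fwdDiff] at hstep hprev ⊢
    rw [succ_nsmul, ← add_assoc, succ_nsmul', ← sub_add_sub_cancel _ (g (y + m • h)), hstep, hprev]

theorem fwdDiff_iter_smul_const {R : Type*} [Ring R] [Module R G] (g : M → R) (b : G) (k : ℕ) :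
    Δ_[h] ^[k] (fun y ↦ g y • b) = fun y ↦ Δ_[h] ^[k] g y • b := by
  induction k with
  | zero => rfl
  | succ k ih =>
    rw [iterate_succ_apply', ih, fwdDiff_smul_const, iterate_succ_apply']
    rfl

theorem fwdDiff_iter_sum_pow_smul {R : Type*} [CommRing R] [Module R G] (β : ℕ → G) (k : ℕ) :
    Δ_[(1 : R)] ^[k] (fun r : R ↦ ∑ i ∈ Finset.range (k + 1), r ^ i • β i)
      = fun _ ↦ k.factorial • β k := by
  have hlower : ∀ i ∈ Finset.range k, Δ_[(1 : R)] ^[k] (fun r : R ↦ r ^ i • β i) = 0 := by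
    intro i hi
    rw [fwdDiff_iter_smul_const, fwdDiff_iter_pow_eq_zero_of_lt (Finset.mem_range.mp hi)]
    funext _
    exact zero_smul R _
  have hsum : (fun r : R ↦ ∑ i ∈ Finset.range (k + 1), r ^ i • β i)
      = ∑ i ∈ Finset.range (k + 1), fun r ↦ r ^ i • β i := by
    funext r
    simp
  rw [hsum, fwdDiff_iter_finsetSum, Finset.sum_range_succ, Finset.sum_eq_zero hlower, zero_add,
    fwdDiff_iter_smul_const, fwdDiff_iter_eq_factorial]
  funext _
  exact Nat.cast_smul_eq_nsmul R _ _

end ForwardDifference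

section WeylSums

variable {M G : Type*} [AddCommMonoid M] [AddCommGroup G] {h : M} {c : G}

theorem tendsto_birkhoffAverage_addChar_of_fwdDiff_eq_const {ψ : AddChar G Circle} {g : M → G}
    (hc : ψ c ≠ 1) (hg : Δ_[h] g = fun _ ↦ c) (x : M) :
    Tendsto (birkhoffAverage ℝ (· + h) (fun y ↦ (ψ (g y) : ℂ)) · x) atTop (𝓝 0) := by
  have hne : (ψ c : ℂ) - 1 ≠ 0 := sub_ne_zero.mpr (Circle.coe_eq_one.not.mpr hc)
  have hstep (y : M) : (ψ (g (y + h)) : ℂ) = ψ c * ψ (g y) := by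
    rw [← congrFun hg y, fwdDiff, ← Circle.coe_mul, ← AddChar.map_add_eq_mul, sub_add_cancel]
  have hshift := tendsto_birkhoffAverage_comp_iterate_sub (g := fun y ↦ (ψ (g y) : ℂ))
    (fun y ↦ (Circle.norm_coe _).le) (· + h) 1 x
  have hscaled := hshift.const_smul ((ψ c : ℂ) - 1)⁻¹
  rw [smul_zero] at hscaled
  refine hscaled.congr fun N ↦ ?_
  have hfactor : birkhoffAverage ℝ (· + h) ((fun y ↦ (ψ (g y) : ℂ)) ∘ (· + h)^[1]) N x
      = (ψ c : ℂ) • birkhoffAverage ℝ (· + h) (fun y ↦ (ψ (g y) : ℂ)) N x := by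
    rw [← birkhoffAverage_const_smul]
    congr 1
    exact funext hstep
  rw [hfactor, smul_eq_mul, smul_eq_mul, ← sub_one_mul, inv_mul_cancel_left₀ hne]

theorem tendsto_birkhoffAverage_addChar_of_fwdDiff_iter_eq_const {ψ : AddChar G Circle}
    (hc : ¬ IsOfFinOrder (ψ c)) {k : ℕ} {g : M → G} (hg : Δ_[h] ^[k + 1] g = fun _ ↦ c) (x : M) :
    Tendsto (birkhoffAverage ℝ (· + h) (fun y ↦ (ψ (g y) : ℂ)) · x) atTop (𝓝 0) := by
  induction k generalizing g c with
  | zero =>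
    exact tendsto_birkhoffAverage_addChar_of_fwdDiff_eq_const
      (fun h1 ↦ hc (h1 ▸ IsOfFinOrder.one)) hg x
  | succ k ih =>
    refine tendsto_birkhoffAverage_zero_of_tendsto_inner (fun y ↦ (Circle.norm_coe _).le)
      fun m hm ↦ ?_
    have hdiff : Δ_[h] ^[k + 1] (Δ_[m • h] g) = fun _ ↦ m • c := by
      rw [(commute_fwdDiff h (m • h)).iterate_left (k + 1) g]
      exact fwdDiff_nsmul_of_fwdDiff_eq_const ((iterate_succ_apply' _ _ _).symm.trans hg) m
    have hmc : ¬ IsOfFinOrder (ψ (m • c)) := by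
      rw [AddChar.map_nsmul_eq_pow]
      exact fun hfin ↦ hc (hfin.of_pow hm)
    have hinner (y : M) : ⟪(ψ (g y) : ℂ), (ψ (g ((· + h)^[m] y)) : ℂ)⟫
        = Complex.reCLM (ψ (Δ_[m • h] g y)) := by
      rw [Complex.inner, ← Circle.coe_inv_eq_conj, ← Circle.coe_mul, add_right_iterate, fwdDiff,
        AddChar.map_sub_eq_div, div_eq_mul_inv, Complex.reCLM_apply]
    simp only [hinner]
    have hre := (Complex.reCLM.continuous.tendsto 0).comp (ih hmc hdiff)
    rw [map_zero] at hre
    exact hre.congr fun N ↦ map_birkhoffAverage ℝ ℝ Complex.reCLM _ _ _ _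

end WeylSums

section AddCircle

theorem isOfFinAddOrder_of_zsmul {G : Type*} [AddGroup G] {a : G} {m : ℤ} (hm : m ≠ 0)
    (h : IsOfFinAddOrder (m • a)) : IsOfFinAddOrder a := by
  obtain ⟨n, hn, hnm⟩ := isOfFinAddOrder_iff_zsmul_eq_zero.mp h
  exact isOfFinAddOrder_iff_zsmul_eq_zero.mpr ⟨n * m, mul_ne_zero hn hm, by rw [mul_smul, hnm]⟩

variable {T : ℝ} [Fact (0 < T)]

theorem isOfFinAddOrder_of_isOfFinOrder_toCircle {c : AddCircle T}
    (hc : IsOfFinOrder c.toCircle) : IsOfFinAddOrder c := by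
  obtain ⟨n, hn, hpow⟩ := isOfFinOrder_iff_pow_eq_one.mp hc
  rw [← AddCircle.toCircle_nsmul, ← AddCircle.toCircle_zero (T := T)] at hpow
  exact isOfFinAddOrder_iff_nsmul_eq_zero.mpr
    ⟨n, hn, AddCircle.injective_toCircle (Fact.out : 0 < T).ne' hpow⟩

theorem equidistributedAlong_of_fwdDiff_iter_eq_const {M : Type*} [AddCommMonoid M] {h : M}
    {c : AddCircle T} (hc : ¬ IsOfFinAddOrder c) {k : ℕ} {g : M → AddCircle T}
    (hg : Δ_[h] ^[k + 1] g = fun _ ↦ c) (x : M) :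
    EquidistributedAlong (· + h) x g AddCircle.haarAddCircle := by
  refine equidistributedAlong_haarAddCircle_of_tendsto_fourier fun m hm ↦ ?_
  have hmc : ¬ IsOfFinOrder (m • c).toCircle := fun hfin ↦
    hc (isOfFinAddOrder_of_zsmul hm (isOfFinAddOrder_of_isOfFinOrder_toCircle hfin))
  have hmg : Δ_[h] ^[k + 1] (m • g) = fun _ ↦ m • c := by
    rw [fwdDiff_iter_const_smul, hg]
    rfl
  exact tendsto_birkhoffAverage_addChar_of_fwdDiff_iter_eq_const
    (ψ := AddCircle.toCircle_addChar) hmc hmg x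

theorem denseRange_sum_pow_zsmul_of_leadingCoeff {β : ℕ → AddCircle T} {k : ℕ}
    (hβ : ¬ IsOfFinAddOrder (β (k + 1))) :
    DenseRange fun n : ℤ ↦ ∑ i ∈ Finset.range (k + 2), n ^ i • β i := by
  have hc : ¬ IsOfFinAddOrder ((k + 1).factorial • β (k + 1)) := by
    rw [isOfFinAddOrder_nsmul]
    exact not_or.mpr ⟨hβ, (k + 1).factorial_ne_zero⟩
  exact (equidistributedAlong_of_fwdDiff_iter_eq_const hc
    (fwdDiff_iter_sum_pow_smul (R := ℤ) β (k + 1)) 0).denseRange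

end AddCircle

section Polynomial

theorem denseRange_sum_pow_zsmul {T : ℝ} [Fact (0 < T)] {d j : ℕ} {β : ℕ → AddCircle T}
    (hj : j ∈ Finset.Icc 1 d) (hβ : ¬ IsOfFinAddOrder (β j)) :
    DenseRange fun n : ℤ ↦ ∑ i ∈ Finset.range (d + 1), n ^ i • β i := by
  induction d generalizing β with
  | zero => simp at hj
  | succ d ih =>
    by_cases htop : IsOfFinAddOrder (β (d + 1))
    · obtain ⟨q, hq, hqβ⟩ := isOfFinAddOrder_iff_zsmul_eq_zero.mp htop
      have hjd : j ∈ Finset.Icc 1 d := by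
        have : j ≠ d + 1 := fun h ↦ hβ (h ▸ htop)
        simp only [Finset.mem_Icc] at hj ⊢
        omega
      have hlower := ih (β := fun i ↦ q ^ i • β i) hjd fun hfin ↦
        hβ (isOfFinAddOrder_of_zsmul (pow_ne_zero j hq) hfin)
      have hrescale (n : ℤ) : ∑ i ∈ Finset.range (d + 1), n ^ i • q ^ i • β i
          = ∑ i ∈ Finset.range (d + 2), (n * q) ^ i • β i := by
        rw [Finset.sum_range_succ _ (d + 1), mul_pow, pow_succ q, ← mul_assoc, mul_smul _ q, hqβ,
          smul_zero, add_zero]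
        simp only [mul_pow, mul_smul]
      simp only [hrescale] at hlower
      exact Dense.mono (range_comp_subset_range (· * q) fun n ↦
        ∑ i ∈ Finset.range (d + 2), n ^ i • β i) hlower
    · exact denseRange_sum_pow_zsmul_of_leadingCoeff htop

theorem exists_pos_nsmul_eq_zero {ι G : Type*} [AddMonoid G] {s : Finset ι} {a : ι → G}
    (ha : ∀ i ∈ s, IsOfFinAddOrder (a i)) : ∃ n : ℕ, 0 < n ∧ ∀ i ∈ s, n • a i = 0 :=
  ⟨∏ i ∈ s, addOrderOf (a i), Finset.prod_pos fun i hi ↦ (ha i hi).addOrderOf_pos,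
    fun _ hi ↦ addOrderOf_dvd_iff_nsmul_eq_zero.mp (Finset.dvd_prod_of_mem _ hi)⟩

theorem periodic_pow_smul {R G : Type*} [CommRing R] [AddCommGroup G] [Module R G] {q : R} {a : G}
    (hq : q • a = 0) (i : ℕ) : Periodic (fun r : R ↦ r ^ i • a) q := by
  intro r
  obtain ⟨s, hs⟩ : q ∣ (r + q) ^ i - r ^ i := by simpa using sub_dvd_pow_sub_pow (r + q) r i
  rw [← sub_eq_zero, ← sub_smul, hs, mul_comm, mul_smul, hq, smul_zero]

end Polynomial

theorem not_denseRange_of_forall_notMem_image_Ioo {ι : Type*} {T : ℝ} {u : ι → AddCircle T}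
    {a b : ℝ} (hab : a < b) (hu : ∀ i, u i ∉ ((↑) : ℝ → AddCircle T) '' Ioo a b) :
    ¬ DenseRange u := by
  intro hdense
  obtain ⟨i, hi⟩ := hdense.exists_mem_open (QuotientAddGroup.isOpenMap_coe _ isOpen_Ioo)
    ((nonempty_Ioo.mpr hab).image _)
  exact hu i hi

theorem stmt_16_general {T : ℝ} [Fact (0 < T)] (d : ℕ) (α : ℕ → AddCircle T) (P : ℤ → AddCircle T)
    (hP : ∀ n : ℤ, P n = ∑ i ∈ Finset.range (d + 1), (n ^ i : ℤ) • α i) (hdense : ¬ DenseRange P) :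
    (∀ i ∈ Finset.Icc 1 d, IsOfFinAddOrder (α i)) ∧
    ∃ Q : ℤ, 1 ≤ Q ∧ ∀ n : ℤ, P (n + Q) = P n := by
  obtain rfl := funext hP
  have htorsion : ∀ i ∈ Finset.Icc 1 d, IsOfFinAddOrder (α i) := fun i hi ↦
    not_not.mp fun hαi ↦ hdense (denseRange_sum_pow_zsmul hi hαi)
  obtain ⟨q, hq, hqα⟩ := exists_pos_nsmul_eq_zero htorsion
  refine ⟨htorsion, q, by exact_mod_cast hq, fun n ↦ Finset.sum_congr rfl fun i hi ↦ ?_⟩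
  rcases i.eq_zero_or_pos with rfl | hi_pos
  · simp
  · have hqi := hqα i (Finset.mem_Icc.mpr ⟨hi_pos, Finset.mem_range_succ_iff.mp hi⟩)
    exact periodic_pow_smul (by rwa [natCast_zsmul]) i n

/-- If a polynomial `P : ℤ → ℝ/ℤ` of degree at most `d` avoids an interval of positive
length in the circle, then all its nonconstant coefficients are torsion (rational), and
`P` is periodic. -/
theorem stmt_16 (d : ℕ) (α : ℕ → AddCircle (1 : ℝ)) (P : ℤ → AddCircle (1 : ℝ))
    (hP : ∀ n : ℤ, P n = ∑ i ∈ Finset.range (d + 1), (n ^ i : ℤ) • α i)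
    (a ε : ℝ) (hε : 0 < ε)
    (havoid : ∀ n : ℤ, P n ∉ (fun x : ℝ => (x : AddCircle (1 : ℝ))) '' Set.Ioo a (a + ε)) :
    (∀ i ∈ Finset.Icc 1 d, IsOfFinAddOrder (α i)) ∧
    ∃ Q : ℤ, 1 ≤ Q ∧ ∀ n : ℤ, P (n + Q) = P n :=
  stmt_16_general d α P hP
    (not_denseRange_of_forall_notMem_image_Ioo (lt_add_of_pos_right a hε) havoid)
end
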